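/- Let n be a positive even integer and z ∈ I^FPF_n. Then every coefficient of the symplectic Grothendieck polynomial 𝔊^Sp_z, regarded as a polynomial in β, x_1, …, x_n with integer coefficients, is nonnegative; that is, 𝔊^Sp_z ∈ ℕ[β][x_1,…,x_n]. -/

import Mathlib

open MvPolynomial

noncomputable section

/-- The coefficient ring `ℤ[β]`. -/
abbrev Rb : Type := Polynomial ℤ

/-- The indeterminate `β`. -/
def bb : Rb := Polynomial.X

/-- The order-reversing permutation `n⋯321`, i.e. `i ↦ n+1-i` in 1-indexed notation. -/
def revPerm (n : ℕ) : Equiv.Perm (Fin n) :=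
  ⟨Fin.rev, Fin.rev, fun i => Fin.rev_rev i, fun i => Fin.rev_rev i⟩

/-- `z` is a fixed-point-free involution. -/
def IsFPF {n : ℕ} (z : Equiv.Perm (Fin n)) : Prop :=
  z * z = 1 ∧ ∀ i, z i ≠ i

/-- `x_i + x_j + β x_i x_j`. -/
def oplus {n : ℕ} (i j : Fin n) : MvPolynomial (Fin n) Rb :=
  X i + X j + C bb * (X i * X j)

/-- `IsDivDiffB i j f g` encodes `∂_i^{(β)} f = g` where `j = i+1`:
`∂_i^{(β)} f = ((1+βx_j) f - s_i((1+βx_j) f)) / (x_i - x_j)`, stated multiplicatively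
(the quotient is exact, and `g` is uniquely determined since the ring is a domain). -/
def IsDivDiffB {n : ℕ} (i j : Fin n) (f g : MvPolynomial (Fin n) Rb) : Prop :=
  (X i - X j) * g =
    (1 + C bb * X j) * f - rename ⇑(Equiv.swap i j) ((1 + C bb * X j) * f)

/-- `∏_{1 ≤ i < j ≤ n-i} (x_i + x_j + β x_i x_j)` (variables 0-indexed). -/
def spTop (n : ℕ) : MvPolynomial (Fin n) Rb :=
  ∏ p ∈ Finset.univ.filter
      (fun p : Fin n × Fin n => p.1 < p.2 ∧ (p.1 : ℕ) + (p.2 : ℕ) + 2 ≤ n),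
    oplus p.1 p.2

/-- `x_1^{n-1} x_2^{n-2} ⋯ x_{n-1}^1` (variables 0-indexed). -/
def grTop (n : ℕ) : MvPolynomial (Fin n) Rb :=
  ∏ a : Fin n, X a ^ (n - 1 - (a : ℕ))

/-- The defining property of the family of symplectic Grothendieck polynomials. -/
def IsSpFam (n : ℕ) (G : Equiv.Perm (Fin n) → MvPolynomial (Fin n) Rb) : Prop :=
  G (revPerm n) = spTop n ∧
    ∀ z : Equiv.Perm (Fin n), IsFPF z →
      ∀ i j : Fin n, (j : ℕ) = (i : ℕ) + 1 →
        z i ≠ j → z j ≠ i → z j < z i →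
          IsDivDiffB i j (G z) (G (Equiv.swap i j * z * Equiv.swap i j))

/-- The defining property of the family of Grothendieck polynomials. -/
def IsGrothFam (n : ℕ) (G : Equiv.Perm (Fin n) → MvPolynomial (Fin n) Rb) : Prop :=
  G (revPerm n) = grTop n ∧
    ∀ (w : Equiv.Perm (Fin n)) (i j : Fin n), (j : ℕ) = (i : ℕ) + 1 →
      w j < w i → IsDivDiffB i j (G w) (G (w * Equiv.swap i j))

/-- The length (number of inversions) of a permutation. -/
def invLen {n : ℕ} (w : Equiv.Perm (Fin n)) : ℕ :=
  (Finset.univ.filter (fun p : Fin n × Fin n => p.1 < p.2 ∧ w p.2 < w p.1)).card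

/-- The fixed-point-free involution length `ℓ_fpf(z) = #{(i,j) : z(i) > z(j) < i < j}`. -/
def fpfLen {n : ℕ} (z : Equiv.Perm (Fin n)) : ℕ :=
  (Finset.univ.filter
      (fun p : Fin n × Fin n => z p.2 < z p.1 ∧ z p.2 < p.1 ∧ p.1 < p.2)).card

/-- The underlying function of `Θ = (1,2)(3,4)⋯(n-1,n)`. -/
def thetaFun (n : ℕ) (hn : n % 2 = 0) (i : Fin n) : Fin n :=
  ⟨if (i : ℕ) % 2 = 0 then (i : ℕ) + 1 else (i : ℕ) - 1, by
    have hi := i.isLt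
    split_ifs with h <;> omega⟩

/-- The fixed-point-free involution `Θ = (1,2)(3,4)⋯(n-1,n)`. -/
def theta (n : ℕ) (hn : n % 2 = 0) : Equiv.Perm (Fin n) :=
  Function.Involutive.toPerm (thetaFun n hn) (by
    intro i
    have hi := i.isLt
    apply Fin.ext
    simp only [thetaFun]
    split_ifs <;> omega)

/-- One step of the partial Hecke action: `heckeStep a z = some (z · s_{a+1})` when defined,
with `a` a 0-indexed letter (so `a` corresponds to the simple transposition of `a+1, a+2`
in 1-indexed notation). -/
def heckeStep {n : ℕ} (a : ℕ) (z : Equiv.Perm (Fin n)) : Option (Equiv.Perm (Fin n)) :=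
  if h : a + 1 < n then
    let i : Fin n := ⟨a, Nat.lt_of_succ_lt h⟩
    let j : Fin n := ⟨a + 1, h⟩
    if z i < z j then some (Equiv.swap i j * z * Equiv.swap i j)
    else if z i = j ∧ z j = i then none
    else if z i ≠ j ∧ z j ≠ i ∧ z j < z i then some z
    else none
  else none

/-- Apply a word of (0-indexed) letters to `z` via the partial Hecke action. -/
def heckeApply {n : ℕ} (l : List ℕ) (z : Equiv.Perm (Fin n)) :
    Option (Equiv.Perm (Fin n)) :=
  l.foldl (fun o a => o.bind (heckeStep a)) (some z)

/-- The simple transposition corresponding to the 0-indexed letter `a`. -/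
def swapAt (n : ℕ) (a : ℕ) : Equiv.Perm (Fin n) :=
  if h : a + 1 < n then Equiv.swap ⟨a, Nat.lt_of_succ_lt h⟩ ⟨a + 1, h⟩ else 1

/-- The permutation `s_{i_1} s_{i_2} ⋯ s_{i_l}` of a word. -/
def wordToPerm (n : ℕ) (l : List ℕ) : Equiv.Perm (Fin n) := (l.map (swapAt n)).prod

/-- `l` is a reduced word for `w`. -/
def IsReducedWord (n : ℕ) (w : Equiv.Perm (Fin n)) (l : List ℕ) : Prop :=
  (∀ a ∈ l, a + 1 < n) ∧ wordToPerm n l = w ∧ l.length = invLen w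

/-- The set of Hecke atoms `B_fpf(z)`. -/
def Bfpf (n : ℕ) (hn : n % 2 = 0) (z : Equiv.Perm (Fin n)) :
    Finset (Equiv.Perm (Fin n)) :=
  @Finset.filter _
    (fun w => ∃ l : List ℕ, IsReducedWord n w l ∧ heckeApply l (theta n hn) = some z)
    (Classical.decPred _) Finset.univ

/-- `extPerm z w` is the permutation `z × w` acting on the first `m` letters by `z`
and the last `n` letters by `w`. -/
def extPerm {m n : ℕ} (z : Equiv.Perm (Fin m)) (w : Equiv.Perm (Fin n)) :
    Equiv.Perm (Fin (m + n)) :=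
  finSumFinEquiv.symm.trans ((Equiv.sumCongr z w).trans finSumFinEquiv)

/-- `rank(z_{[i][j]}) = #{k ∈ [j] : z(k) ≤ i}` (1-indexed sizes `i, j`). -/
def permRank {n : ℕ} (z : Equiv.Perm (Fin n)) (i j : ℕ) : ℕ :=
  (Finset.univ.filter (fun k : Fin n => (k : ℕ) < j ∧ ((z k : Fin n) : ℕ) < i)).card

/-- The rank of the upper-left `i × j` corner of `A` (1-indexed sizes `i, j ≤ n`). -/
def cornerRank {n : ℕ} (A : Matrix (Fin n) (Fin n) ℂ) (i j : ℕ) : ℕ :=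
  Matrix.rank (Matrix.of fun (a : Fin (min i n)) (b : Fin (min j n)) =>
    A ⟨(a : ℕ), lt_of_lt_of_le a.isLt (min_le_right i n)⟩
      ⟨(b : ℕ), lt_of_lt_of_le b.isLt (min_le_right j n)⟩)

/-- The orthogonal Rothe diagram `D^O(z) = {(i, z(j)) : z(i) > z(j) ≤ i < j}` (0-indexed). -/
def DO (n : ℕ) (z : Equiv.Perm (Fin n)) : Finset (Fin n × Fin n) :=
  Finset.image (fun p : Fin n × Fin n => (p.1, z p.2))
    (Finset.univ.filter (fun p : Fin n × Fin n => z p.2 < z p.1 ∧ z p.2 ≤ p.1 ∧ p.1 < p.2))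

/-- The symplectic Rothe diagram `D^Sp(z) = {(i, z(j)) : z(i) > z(j) < i < j}` (0-indexed). -/
def DSp (n : ℕ) (z : Equiv.Perm (Fin n)) : Finset (Fin n × Fin n) :=
  Finset.image (fun p : Fin n × Fin n => (p.1, z p.2))
    (Finset.univ.filter (fun p : Fin n × Fin n => z p.2 < z p.1 ∧ z p.2 < p.1 ∧ p.1 < p.2))

/-- The essential set `Ess(D) = {(i,j) ∈ D : (i,j+1) ∉ D and (i+1,j) ∉ D}`. -/
def Ess {n : ℕ} (D : Finset (Fin n × Fin n)) : Finset (Fin n × Fin n) :=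
  D.filter (fun p =>
    (∀ q ∈ D, ¬(q.1 = p.1 ∧ (q.2 : ℕ) = (p.2 : ℕ) + 1)) ∧
    (∀ q ∈ D, ¬((q.1 : ℕ) = (p.1 : ℕ) + 1 ∧ q.2 = p.2)))

/-- A permutation is vexillary if it avoids the pattern 2143. -/
def Vexillary {n : ℕ} (z : Equiv.Perm (Fin n)) : Prop :=
  ¬ ∃ i j k l : Fin n, i < j ∧ j < k ∧ k < l ∧ z j < z i ∧ z i < z l ∧ z l < z k

/-- The ideal of `ℤ[x_1,…,x_N]` generated by symmetric polynomials with zero constant term. -/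
def ILambda (N : ℕ) : Ideal (MvPolynomial (Fin N) ℤ) :=
  Ideal.span {f : MvPolynomial (Fin N) ℤ |
    (∀ σ : Equiv.Perm (Fin N), rename (⇑σ) f = f) ∧ coeff 0 f = 0}

/-- Substitute `x_j = 0` for all `j > n`, producing a polynomial in `x_1,…,x_n`. -/
def truncVars (n N : ℕ) (f : MvPolynomial (Fin N) Rb) : MvPolynomial (Fin n) Rb :=
  aeval (fun i : Fin N => if h : (i : ℕ) < n then X ⟨(i : ℕ), h⟩ else 0) f

/-- The order used to list the elements of a pipe-dream subset `S`:
rows weakly increasing, columns strictly decreasing within a row. -/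
def rowOrder {n : ℕ} (p q : Fin n × Fin n) : Prop :=
  p.1 < q.1 ∨ (p.1 = q.1 ∧ q.2 < p.2)

/-- `δ(S)` is a symplectic Hecke word for `z` (with Hecke words computed from `Θ`);
here `L` is the listing of `S` in the order `rowOrder`, and `(a,b) ∈ S` (0-indexed)
contributes the 0-indexed letter `a + b`, i.e. the 1-indexed letter `(b+1)+(a+1)-1`. -/
def DeltaHeckeWord (n : ℕ) (hn : n % 2 = 0) (z : Equiv.Perm (Fin n))
    (S : Finset (Fin n × Fin n)) : Prop :=
  ∃ L : List (Fin n × Fin n), L.toFinset = S ∧ L.Chain' rowOrder ∧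
    heckeApply (L.map (fun p => (p.1 : ℕ) + (p.2 : ℕ))) (theta n hn) = some z


set_option linter.unusedSimpArgs false

/-! ### Part 1 -/

/-! ### Abstract algebra -/
section alg
variable {R A : Type*} [CommRing R] [Ring A] [Algebra R A] 

/-- formal group law -/
def op (β a b : R) : R := a + b + β * (a * b)

/-- h_u(t) -/
def hh (u : A) (t : R) : A := 1 + t • u

theorem hh_mul (β : R) (u : A) (hu : u * u = β • u) (a b : R) :
    hh u a * hh u b = hh u (op β a b) := by
  simp only [hh, op, mul_add, add_mul, smul_mul_assoc, mul_smul_comm, smul_smul, one_mul, mul_one, hu]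
  module

theorem hh_comm (u v : A) (h : u * v = v * u) (a b : R) :
    hh u a * hh v b = hh v b * hh u a := by
  simp only [hh, mul_add, add_mul, smul_mul_assoc, mul_smul_comm, smul_smul, one_mul, mul_one, h]
  module

/-- symmetric element in L1 -/
def S1 (β : R) (u v : A) (t a b : R) : A :=
  1 + (op β t (op β a b)) • u + t • v + (op β t a * op β t b) • (v * u)
    - (a * b * (1 + β * t)) • (u * v)

theorem S1_symm (β : R) (u v : A) (t a b : R) : S1 β u v t a b = S1 β u v t b a := by
  simp only [S1, op]; module

theorem L1 (β : R) (u v : A) (hu : u * u = β • u) (hv : v * v = β • v)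
    (huv : u * (v * u) = v * (u * v)) (t a b : R) :
    hh u b * (hh v (op β t b) * hh u (op β t a)) = S1 β u v t a b * hh v b := by
  simp only [S1, hh, mul_add, add_mul, sub_mul, smul_mul_assoc, mul_smul_comm, smul_smul, one_mul, mul_one,
    hu, hv, mul_assoc, huv]
  simp only [op]
  module

/-- symmetric element in L2 -/
def S2 (β : R) (u v : A) (a b y c : R) : A :=
  (1 + (op β a b) • u - (a * b) • (v * u) + (a * b) • (u * v)) * (hh u y * (hh v y * hh u c))

theorem S2_symm (β : R) (u v : A) (a b y c : R) : S2 β u v a b y c = S2 β u v b a y c := by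
  simp only [S2, op]; congr 1; module

theorem L2 (β : R) (u v : A) (hu : u * u = β • u) (hv : v * v = β • v)
    (huv : u * (v * u) = v * (u * v)) (a b y c : R) :
    hh u (op β a y) * (hh v (op β b y) * hh u (op β b c)) = hh v b * S2 β u v a b y c := by
  have hu' : ∀ w, u * (u * w) = β • (u * w) := fun w => by rw [← mul_assoc, hu, smul_mul_assoc]
  have hv' : ∀ w, v * (v * w) = β • (v * w) := fun w => by rw [← mul_assoc, hv, smul_mul_assoc]
  have huv' : ∀ w, u * (v * (u * w)) = v * (u * (v * w)) := fun w => by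
    have := congrArg (· * w) huv
    simpa only [mul_assoc] using this
  simp only [S2, hh, mul_add, add_mul, sub_mul, mul_sub, smul_mul_assoc, mul_smul_comm, smul_smul, one_mul, mul_one,
    smul_add, smul_sub, hu, hv, mul_assoc, huv, hu', hv', huv']
  simp only [op]
  module
end alg
/-- adjacent transposition on ℕ -/
def sg (a p : ℕ) : ℕ := if p = a then a + 1 else if p = a + 1 then a else p

theorem sg_sg (a p : ℕ) : sg a (sg a p) = p := by unfold sg; split_ifs <;> omega

/-- fixed-point-free involutions on ℕ -/
def FI : Type := {v : ℕ → ℕ // (∀ p, v (v p) = p) ∧ ∀ p, v p ≠ p}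

/-- conjugation -/
def cj (a : ℕ) (z : FI) : FI := ⟨fun p => sg a (z.1 (sg a p)), by
  intro p; simp only [sg_sg, z.2.1], by
  intro p h
  have := congrArg (sg a) h
  rw [sg_sg] at this
  exact z.2.2 _ this⟩

theorem cj_val (a : ℕ) (z : FI) (p : ℕ) : (cj a z).1 p = sg a (z.1 (sg a p)) := rfl

theorem cj_cj (a : ℕ) (z : FI) : cj a (cj a z) = z := by
  apply Subtype.ext; funext p; simp only [cj_val, sg_sg]

theorem cj_comm (a b : ℕ) (h : a + 2 ≤ b) (z : FI) : cj a (cj b z) = cj b (cj a z) := by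
  have : ∀ p, sg a (sg b p) = sg b (sg a p) := by
    intro p; unfold sg; split_ifs <;> omega
  apply Subtype.ext; funext p; simp only [cj_val, this]

theorem cj_braid (a : ℕ) (z : FI) :
    cj a (cj (a+1) (cj a z)) = cj (a+1) (cj a (cj (a+1) z)) := by
  have : ∀ p, sg a (sg (a+1) (sg a p)) = sg (a+1) (sg a (sg (a+1) p)) := by
    intro p; unfold sg; split_ifs <;> omega
  apply Subtype.ext; funext p; simp only [cj_val, this]

/-- descent condition -/
def Ds (a : ℕ) (z : FI) : Prop := z.1 (a+1) < z.1 a ∧ z.1 a ≠ a + 1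

instance (a : ℕ) (z : FI) : Decidable (Ds a z) := by unfold Ds; infer_instance

section
variable {R : Type*} [CommRing R]

/-- the operator -/
def TT (β : R) (a : ℕ) : Module.End R (FI → R) where
  toFun f z := if Ds a z then f (cj a z) + β * f z else 0
  map_add' f g := by funext z; simp only [Pi.add_apply]; split_ifs <;> ring
  map_smul' c f := by funext z; simp only [Pi.smul_apply, smul_eq_mul, RingHom.id_apply]; split_ifs <;> ring

theorem TT_apply (β : R) (a : ℕ) (f : FI → R) (z : FI) :
   TT β a f z = if Ds a z then f (cj a z) + β * f z else 0 := rfl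

theorem Ds_cj (a : ℕ) (z : FI) (h : Ds a z) : ¬ Ds a (cj a z) := by
  have h1 := z.2.1 a
  have h2 := z.2.1 (a+1)
  have h3 := z.2.2 a
  have h4 := z.2.2 (a+1)
  unfold Ds at *
  simp only [cj_val, sg, if_true, Nat.succ_ne_self, if_false]
  grind

theorem TT_sq (β : R) (a : ℕ) : TT β a * TT β a = β • TT β a := by
  ext f z
  simp only [Module.End.mul_apply, TT_apply, LinearMap.smul_apply, Pi.smul_apply, smul_eq_mul]
  by_cases h : Ds a z
  · simp [h, Ds_cj a z h]
  · simp [h]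

theorem TT_comm (β : R) (a b : ℕ) (hab : a + 2 ≤ b) : TT β a * TT β b = TT β b * TT β a := by
  ext f z
  simp only [Module.End.mul_apply, TT_apply]
  have h1 := z.2.1 a
  have h2 := z.2.1 (a+1)
  have h3 := z.2.1 b
  have h4 := z.2.1 (b+1)
  by_cases hc : z.1 a = b ∧ z.1 (a+1) = b+1 ∨ z.1 a = b+1 ∧ z.1 (a+1) = b
  · have e : cj a z = cj b z := by
      apply Subtype.ext; funext p; simp only [cj_val, sg]; grind
    have e2 : Ds a z ↔ Ds b z := by unfold Ds; grind
    have e3 : Ds a (cj b z) ↔ Ds b (cj b z) := by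
      unfold Ds; simp only [cj_val, sg]; grind
    simp only [e, e2, e3, cj_comm a b hab]
  · have e1 : Ds a (cj b z) ↔ Ds a z := by
      unfold Ds; simp only [cj_val, sg]; grind
    have e2 : Ds b (cj a z) ↔ Ds b z := by
      unfold Ds; simp only [cj_val, sg]; grind
    simp only [e1, e2, cj_comm a b hab]
    split_ifs <;> ring

set_option maxHeartbeats 2000000 in
set_option linter.unusedSimpArgs false in
theorem TT_braid (β : R) (a : ℕ) :
    TT β a * (TT β (a+1) * TT β a) = TT β (a+1) * (TT β a * TT β (a+1)) := by
  ext f z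
  simp only [Module.End.mul_apply, TT_apply]
  have h1 := z.2.1 a
  have h2 := z.2.1 (a+1)
  have h3 := z.2.1 (a+2)
  have h4 := z.2.2 a
  have h5 := z.2.2 (a+1)
  have h6 := z.2.2 (a+2)
  rw [cj_braid, cj_cj, cj_cj]
  obtain ⟨p, hp⟩ : ∃ p, z.1 a = p := ⟨_, rfl⟩
  obtain ⟨q, hq⟩ : ∃ q, z.1 (a+1) = q := ⟨_, rfl⟩
  obtain ⟨r, hr⟩ : ∃ r, z.1 (a+2) = r := ⟨_, rfl⟩
  have hpq : p ≠ q := by grind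
  have hpr : p ≠ r := by grind
  have hqr : q ≠ r := by grind
  rw [hp] at h1 h4; rw [hq] at h2 h5; rw [hr] at h3 h6
  have s1 : sg a a = a + 1 := by simp [sg]
  have s2 : sg a (a+1) = a := by simp [sg]
  have s3 : sg a (a+2) = a+2 := by simp [sg]
  have s4 : sg (a+1) a = a := by unfold sg; split_ifs <;> omega
  have s5 : sg (a+1) (a+1) = a+2 := by simp [sg]
  have s6 : sg (a+1) (a+2) = a+1 := by simp [sg]
  have hs : ∀ x b, x ≠ b → x ≠ b + 1 → sg b x = x := by intro x b; simp only [sg]; grind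
  by_cases hc : (p = a+1 ∨ p = a+2) ∨ (q = a ∨ q = a+2)
  · have hc' : (p = a+1 ∧ q = a ∧ r ≠ a ∧ r ≠ a+1) ∨ (p = a+2 ∧ r = a ∧ q ≠ a ∧ q ≠ a+2)
       ∨ (q = a+2 ∧ r = a+1 ∧ p ≠ a+1 ∧ p ≠ a+2) := by grind
    rcases hc' with ⟨e1, e2, h7, h8⟩ | ⟨e1, e2, h7, h8⟩ | ⟨e1, e2, h7, h8⟩
    all_goals
      simp only [Ds, cj_val, s1, s2, s3, s4, s5, s6, hp, hq, hr, e1, e2, Nat.add_assoc, Nat.reduceAdd]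
    · have t1 := hs r a h7 h8
      have t2 := hs r (a+1) h8 h6
      simp only [t1, t2]
      have k0 : r < a ∨ a + 2 < r := by omega
      rcases k0 with k | k
      · have k1 : r < a + 1 := by omega
        have k2 : r < a + 2 := by omega
        simp [k, k1, k2, not_lt_of_gt]
      · have k1 : a + 1 < r := by omega
        have k2 : a < r := by omega
        simp [k, k1, k2, not_lt_of_gt, h7, h8, h6]
    · have t1 := hs q a h7 h5
      have t2 := hs q (a+1) h5 h8
      simp only [t1, t2]
      have k0 : q < a ∨ a + 2 < q := by omega
      rcases k0 with k | k
      · have k1 : q < a + 1 := by omega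
        have k2 : q < a + 2 := by omega
        simp [k, k1, k2, not_lt_of_gt]
      · have k1 : a + 1 < q := by omega
        have k2 : a < q := by omega
        simp [k, k1, k2, not_lt_of_gt, h7, h5, h8]
    · have t1 := hs p a h4 h7
      have t2 := hs p (a+1) h7 h8
      simp only [t1, t2]
      have k0 : p < a ∨ a + 2 < p := by omega
      rcases k0 with k | k
      · have k1 : p < a + 1 := by omega
        have k2 : p < a + 2 := by omega
        simp [k, k1, k2, not_lt_of_gt]
      · have k1 : a + 1 < p := by omega
        have k2 : a < p := by omega
        simp [k, k1, k2, not_lt_of_gt, h4, h7, h8]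
  · have k1 : r ≠ a := by grind
    have k2 : r ≠ a + 1 := by grind
    push Not at hc
    obtain ⟨⟨c1, c2⟩, c3, c4⟩ := hc
    have t1 := hs r a k1 k2
    have t2 := hs r (a+1) k2 h6
    have t3 := hs q a c3 h5
    have t4 := hs q (a+1) h5 c4
    have t5 := hs p a h4 c1
    have t6 := hs p (a+1) c1 c2
    simp only [Ds, cj_val, s1, s2, s3, s4, s5, s6, hp, hq, hr, Nat.add_assoc, Nat.reduceAdd, t1, t2, t3, t4, t5, t6,
      c1, c2, c4, h5, ne_eq, not_false_eq_true, and_true]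
    rcases lt_or_gt_of_ne hpq with h | h <;> rcases lt_or_gt_of_ne hpr with h' | h' <;>
    rcases lt_or_gt_of_ne hqr with h'' | h'' <;> simp only [h, h', h'', not_lt_of_gt, false_and, if_true, if_false] <;> first | omega | ring 
end

/-! ### Part 2 -/

noncomputable section
variable {R : Type*} [CommRing R]

/-- truncated operators -/
def UU (n : ℕ) (β : R) (a : ℕ) : Module.End R (FI → R) := if a + 1 < n then TT β a else 0

theorem UU_sq (n : ℕ) (β : R) (a : ℕ) : UU n β a * UU n β a = β • UU n β a := by
  unfold UU; split_ifs
  · exact TT_sq β a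
  · simp

theorem UU_comm (n : ℕ) (β : R) (a b : ℕ) (hab : a + 2 ≤ b) :
    UU n β a * UU n β b = UU n β b * UU n β a := by
  unfold UU; split_ifs <;> first | exact TT_comm β a b hab | simp

theorem UU_braid (n : ℕ) (β : R) (a : ℕ) :
    UU n β a * (UU n β (a+1) * UU n β a) = UU n β (a+1) * (UU n β a * UU n β (a+1)) := by
  unfold UU; split_ifs <;> first | exact TT_braid β a | simp

/-- h operator -/
def HH (n : ℕ) (β : R) (a : ℕ) (t : R) : Module.End R (FI → R) := hh (UU n β a) t

theorem HH_one (n : ℕ) (β : R) (a : ℕ) (t : R) (h : n ≤ a + 1) : HH n β a t = 1 := by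
  have : ¬ (a + 1 < n) := by omega
  simp [HH, hh, UU, this]

theorem HH_comm (n : ℕ) (β : R) (a b : ℕ) (hab : a + 2 ≤ b) (s t : R) :
    Commute (HH n β a s) (HH n β b t) := hh_comm _ _ (UU_comm n β a b hab) s t

/-- product of h's : `DD r len a y = h_{r+len-1}(a⊕y_{r+len-1}) ⋯ h_r(a⊕y_r)` -/
def DD (n : ℕ) (β : R) (a : R) (y : ℕ → R) : ℕ → ℕ → Module.End R (FI → R)
  | _, 0 => 1
  | r, len + 1 => DD n β a y (r+1) len * HH n β r (op β a (y r))

theorem DD_congr (n : ℕ) (β a : R) (y y' : ℕ → R) (r len : ℕ)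
    (h : ∀ k, r ≤ k → k < r + len → y k = y' k) : DD n β a y r len = DD n β a y' r len := by
  induction len generalizing r with
  | zero => rfl
  | succ l ih =>
    simp only [DD]
    rw [ih (r+1) (fun k h1 h2 => h k (by omega) (by omega)), h r le_rfl (by omega)]

theorem DD_split (n : ℕ) (β a : R) (y : ℕ → R) (r p q : ℕ) :
    DD n β a y r (p + q) = DD n β a y (r+p) q * DD n β a y r p := by
  induction p generalizing r with
  | zero => simp [DD]
  | succ p ih =>
    rw [show p + 1 + q = (p + q) + 1 by omega]
    simp only [DD]
    rw [ih, mul_assoc, show r + 1 + p = r + (p + 1) by omega]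

theorem DD_comm_lt (n : ℕ) (β a : R) (y : ℕ → R) (r len b : ℕ) (t : R) (h : b + 2 ≤ r) :
    Commute (HH n β b t) (DD n β a y r len) := by
  induction len generalizing r with
  | zero => exact Commute.one_right _
  | succ l ih => exact (ih (r+1) (by omega)).mul_right (HH_comm n β b r h _ _)

theorem DD_comm_gt (n : ℕ) (β a : R) (y : ℕ → R) (r len b : ℕ) (t : R) (h : r + len + 1 ≤ b) :
    Commute (HH n β b t) (DD n β a y r len) := by
  induction len generalizing r with
  | zero => exact Commute.one_right _
  | succ l ih => exact (ih (r+1) (by omega)).mul_right (HH_comm n β r b (by omega) _ _).symm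

theorem DD_one (n : ℕ) (β a : R) (y : ℕ → R) (r len : ℕ) (h : n ≤ r + 1) :
    DD n β a y r len = 1 := by
  induction len generalizing r with
  | zero => rfl
  | succ l ih => simp only [DD]; rw [ih (r+1) (by omega), HH_one _ _ _ _ h, one_mul]

theorem DD_symm (n : ℕ) (β a b : R) (y y' : ℕ → R) (r len : ℕ)
    (h : ∀ k, r ≤ k → y' (k+1) = y k) :
    DD n β a y r len * DD n β b y' r len = DD n β b y r len * DD n β a y' r len := by
  induction len generalizing r y' with
  | zero => rfl
  | succ l ih =>
    cases l with
    | zero =>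
      simp only [DD, one_mul, HH, hh_mul β _ (UU_sq n β r)]
      congr 1; simp only [op]; ring
    | succ l =>
      have key : ∀ a b : R, DD n β a y r (l+1+1) * DD n β b y' r (l+1+1) =
          (DD n β a y (r+1) (l+1) * DD n β b (Function.update y' (r+1) 0) (r+1) (l+1)) *
          S2 β (UU n β r) (UU n β (r+1)) a b (y r) (y' r) := by
        intro a b
        have e1 : DD n β a y r (l+1+1) = DD n β a y (r+1) (l+1) * HH n β r (op β a (y r)) := rfl
        have e2 : DD n β b y' r (l+1+1) = DD n β b y' (r+1+1) l * HH n β (r+1) (op β b (y r)) *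
            HH n β r (op β b (y' r)) := by rw [← h r le_rfl]; rfl
        have e3 : DD n β b (Function.update y' (r+1) 0) (r+1) (l+1) =
            DD n β b y' (r+1+1) l * HH n β (r+1) b := by
          simp only [DD, Function.update_self]
          congr 1
          · apply DD_congr; intro k hk _; rw [Function.update_of_ne (by omega)]
          · simp [op]
        have c := (DD_comm_lt n β b y' (r+1+1) l r (op β a (y r)) (by omega)).eq
        have l2 := L2 β (UU n β r) (UU n β (r+1)) (UU_sq n β r) (UU_sq n β _) (UU_braid n β r)
          a b (y r) (y' r)
        change HH n β r _ * (HH n β (r+1) _ * HH n β r _) = HH n β (r+1) _ * _ at l2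
        rw [e1, e2, e3]
        calc _ = DD n β a y (r+1) (l+1) * ((HH n β r (op β a (y r)) * DD n β b y' (r+1+1) l) *
              (HH n β (r+1) (op β b (y r)) * HH n β r (op β b (y' r)))) := by simp only [mul_assoc]
          _ = DD n β a y (r+1) (l+1) * (DD n β b y' (r+1+1) l * (HH n β r (op β a (y r)) * 
              (HH n β (r+1) (op β b (y r)) * HH n β r (op β b (y' r))))) := by
                rw [c]; simp only [mul_assoc]
          _ = _ := by rw [l2]; simp only [mul_assoc]
      rw [key a b, key b a, S2_symm β _ _ b a, ih]
      intro k hk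
      rw [Function.update_of_ne (by omega), h k (by omega)]

/-- The column operators. -/
def PP (n : ℕ) (β : R) (L : ℕ) (x : ℕ → R) (j : ℕ) : Module.End R (FI → R) :=
  DD n β (x j) (fun k => x (k - j)) (2*j+1) (L - (2*j+1))

/-- product of columns -/
def WW (n : ℕ) (β : R) (L : ℕ) (x : ℕ → R) : ℕ → ℕ → Module.End R (FI → R)
  | _, 0 => 1
  | j, d+1 => PP n β L x j * WW n β L x (j+1) d

theorem WW_one (n : ℕ) (β : R) (L : ℕ) (x : ℕ → R) (j d : ℕ) (h : n ≤ 2 * j) :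
    WW n β L x j d = 1 := by
  induction d generalizing j with
  | zero => rfl
  | succ d ih => simp only [WW, PP]; rw [ih _ (by omega), DD_one _ _ _ _ _ _ (by omega), one_mul]

theorem WW_comm (n : ℕ) (β : R) (L : ℕ) (x : ℕ → R) (j d : ℕ) (b : ℕ) (t : R) (h : b + 1 ≤ 2 * j) :
    Commute (HH n β b t) (WW n β L x j d) := by
  induction d generalizing j with
  | zero => exact Commute.one_right _
  | succ d ih =>
    exact (DD_comm_lt _ _ _ _ _ _ _ _ (by omega)).mul_right (ih _ (by omega))

theorem WW_congr (n : ℕ) (β : R) (L : ℕ) (x x' : ℕ → R) (j d : ℕ) (h : ∀ k, j ≤ k → x k = x' k) :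
    WW n β L x j d = WW n β L x' j d := by
  induction d generalizing j with
  | zero => rfl
  | succ d ih =>
    simp only [WW, PP]
    rw [ih (j+1) (fun k hk => h k (by omega)), h j le_rfl]
    congr 1
    apply DD_congr
    intro k h1 h2
    exact h _ (by omega)

/-- Theta -/
def thF : FI := ⟨fun p => if p % 2 = 0 then p + 1 else p - 1, by
  intro p; dsimp only; split_ifs <;> omega, by intro p; dsimp only; split_ifs <;> omega⟩

theorem thF_val (p : ℕ) : thF.1 p = if p % 2 = 0 then p + 1 else p - 1 := rfl

open Classical in
/-- indicator of Theta -/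
def th : FI → R := fun z => if z = thF then 1 else 0

/-- the vector F -/
def FF (n : ℕ) (β : R) (L : ℕ) (x : ℕ → R) (j d : ℕ) : FI → R := WW n β L x j d th

theorem TT_th (β : R) (j : ℕ) : TT β (2*j) (th : FI → R) = 0 := by
  funext z
  rw [TT_apply]
  split_ifs with h
  · have h1 : z ≠ thF := by
      rintro rfl
      simp [Ds, thF_val] at h
    have h2 : cj (2*j) z ≠ thF := by
      intro e
      have e' : z = cj (2*j) thF := by rw [← e, cj_cj]
      subst e'
      simp [Ds, thF_val, cj_val, sg] at h
    simp [th, h1, h2]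
  · rfl

theorem cj_th (j : ℕ) : cj (2*j) (cj (2*j+1) thF) = cj (2*j+2) (cj (2*j+1) thF) := by
  apply Subtype.ext; funext p
  have hs : ∀ x b, x ≠ b → x ≠ b + 1 → sg b x = x := by intro x b; simp only [sg]; grind
  have hs1 : ∀ b, sg b b = b + 1 := by intro b; simp [sg]
  have hs2 : ∀ b, sg b (b+1) = b := by intro b; simp [sg]
  have ht0 : thF.1 (2*j) = 2*j+1 := by simp [thF_val]
  have ht1 : thF.1 (2*j+1) = 2*j := by rw [thF_val]; grind
  have ht2 : thF.1 (2*j+2) = 2*j+2+1 := by rw [thF_val]; grind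
  have ht3 : thF.1 (2*j+2+1) = 2*j+2 := by rw [thF_val]; grind
  have k1 := hs (2*j) (2*j+1) (by omega) (by omega)
  have k2 := hs (2*j) (2*j+2) (by omega) (by omega)
  have k3 := hs (2*j+1) (2*j+2) (by omega) (by omega)
  have k4 := hs (2*j+2) (2*j) (by omega) (by omega)
  have k5 := hs (2*j+2+1) (2*j) (by omega) (by omega)
  have k6 := hs (2*j+2+1) (2*j+1) (by omega) (by omega)
  have k7 : sg (2*j+1) (2*j+1) = 2*j+2 := hs1 _
  have k8 : sg (2*j+1) (2*j+2) = 2*j+1 := hs2 _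
  simp only [cj_val]
  by_cases h0 : p = 2*j
  · simp only [h0, hs1, hs2, ht0, ht1, ht2, ht3, k1, k2, k3, k4, k5, k6, k7, k8]
  by_cases h1 : p = 2*j+1
  · simp only [h1, hs1, hs2, ht0, ht1, ht2, ht3, k1, k2, k3, k4, k5, k6, k7, k8]
  by_cases h2 : p = 2*j+2
  · simp only [h2, hs1, hs2, ht0, ht1, ht2, ht3, k1, k2, k3, k4, k5, k6, k7, k8]
  by_cases h3 : p = 2*j+2+1
  · simp only [h3, hs1, hs2, ht0, ht1, ht2, ht3, k1, k2, k3, k4, k5, k6, k7, k8]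
  have h4 : thF.1 p ≠ 2*j ∧ thF.1 p ≠ 2*j+1 ∧ thF.1 p ≠ 2*j+2 ∧ thF.1 p ≠ 2*j+2+1 := by
    rw [thF_val]; split_ifs <;> omega
  obtain ⟨g0, g1, g2, g3⟩ := h4
  rw [hs p (2*j) h0 h1, hs p (2*j+1) h1 h2, hs p (2*j+2) h2 h3, hs p (2*j+1) h1 h2,
    hs _ (2*j+1) g1 g2, hs _ _ g0 g1, hs _ _ g2 g3]

open Classical in
theorem TT_th2 (β : R) (j : ℕ) : TT β (2*j) (TT β (2*j+1) (th : FI → R)) =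
    TT β (2*j+2) (TT β (2*j+1) (th : FI → R)) := by
  have key : TT β (2*j+1) (th : FI → R) = fun z => if z = cj (2*j+1) thF then 1 else 0 := by
    funext z
    rw [TT_apply]
    have h0 : cj (2*j+1) z = thF ↔ z = cj (2*j+1) thF := by
      constructor
      · intro e; rw [← e, cj_cj]
      · rintro rfl; rw [cj_cj]
    have h1 : ¬ Ds (2*j+1) thF := by
      simp [Ds, thF_val]; grind
    have h2 : Ds (2*j+1) (cj (2*j+1) thF) := by
      simp [Ds, thF_val, cj_val, sg]; grind
    by_cases e : z = cj (2*j+1) thF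
    · have : z ≠ thF := by rintro rfl; rw [← e] at h2; exact h1 h2
      rw [if_pos (by rw [e]; exact h2), if_pos e]
      simp [th, this, h0.2 e]
    · rw [if_neg e]
      split_ifs with h
      · have : z ≠ thF := by rintro rfl; exact h1 h
        have h3 : cj (2*j+1) z ≠ thF := fun h => e (h0.1 h)
        simp [th, this, h3]
      · rfl
  rw [key]
  funext z
  simp only [TT_apply]
  have g : ∀ a, cj a z = cj (2*j+1) thF ↔ z = cj a (cj (2*j+1) thF) := by
    intro a
    constructor
    · intro e; rw [← e, cj_cj]
    · rintro rfl; rw [cj_cj]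
  simp only [g, cj_th]
  have n1 : ¬ Ds (2*j) (cj (2*j+1) thF) := by
    simp [Ds, thF_val, cj_val, sg]; grind
  have n2 : ¬ Ds (2*j+2) (cj (2*j+1) thF) := by
    simp [Ds, thF_val, cj_val, sg]; grind
  by_cases e : z = cj (2*j+1) thF
  · subst e; simp [n1, n2]
  · by_cases e2 : z = cj (2*j+2) (cj (2*j+1) thF)
    · have m1 : Ds (2*j) z := by
        rw [e2, ← cj_th]
        simp [Ds, thF_val, cj_val, sg]; grind
      have m2 : Ds (2*j+2) z := by
        rw [e2]
        simp [Ds, thF_val, cj_val, sg]; grind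
      rw [if_pos m1, if_pos m2]
    · simp [e, e2]
end

/-! ### Part 3 -/

noncomputable section
variable {R : Type*} [CommRing R]

theorem UU_th (n : ℕ) (β : R) (j : ℕ) : UU n β (2*j) (th : FI → R) = 0 := by
  unfold UU; split_ifs
  · exact TT_th β j
  · rfl

theorem UU_th2 (n : ℕ) (hn : n % 2 = 0) (β : R) (j : ℕ) :
    UU n β (2*j) (UU n β (2*j+1) (th : FI → R)) = UU n β (2*j+2) (UU n β (2*j+1) (th : FI → R)) := by
  unfold UU
  by_cases h : 2*j+1+1 < n
  · rw [if_pos h, if_pos (by omega), if_pos (by omega)]; exact TT_th2 β j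
  · rw [if_neg h]; simp

theorem HH_th (n : ℕ) (hn : n % 2 = 0) (β : R) (j : ℕ) (b c : R) :
    HH n β (2*j) b (HH n β (2*j+1) c (th : FI → R)) = HH n β (2*j+2) b (HH n β (2*j+1) c th) := by
  have h1 := UU_th (R := R) n β j
  have h2 := UU_th (R := R) n β (j+1)
  rw [show 2*(j+1) = 2*j+2 by ring] at h2
  simp only [HH, hh, LinearMap.add_apply, Module.End.one_apply, LinearMap.smul_apply, map_add, map_smul,
    h1, h2, UU_th2 n hn]

theorem sg_self (a : ℕ) : sg a a = a + 1 := by simp [sg]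
theorem sg_succ (a : ℕ) : sg a (a+1) = a := by simp [sg]
theorem sg_ne (a x : ℕ) (h1 : x ≠ a) (h2 : x ≠ a + 1) : sg a x = x := by simp [sg, h1, h2]

theorem FF_succ (n : ℕ) (β : R) (L : ℕ) (x : ℕ → R) (j d : ℕ) :
    FF n β L x j (d+1) = PP n β L x j (FF n β L x (j+1) d) := rfl

theorem sym_base (n : ℕ) (hn : n % 2 = 0) (β : R) (L : ℕ) (x : ℕ → R) (j d : ℕ) (hL3 : 2*j+3 ≤ L) :
    HH n β (2*j) (x (j+1)) (FF n β L x j (d+2)) =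
      (DD n β (x j) (fun k => x (k-j)) (2*j+2) (L-(2*j+2)) *
       DD n β (x (j+1)) (fun k => if k = 2*j+2 then 0 else x (k-(j+1))) (2*j+2) (L-(2*j+2)))
        (WW n β L x (j+2) d (HH n β (2*j+1) (op β (x j) (x (j+1))) th)) := by
  have e1 : PP n β L x j = DD n β (x j) (fun k => x (k-j)) (2*j+2) (L-(2*j+2)) *
      HH n β (2*j+1) (op β (x j) (x (j+1))) := by
    unfold PP
    rw [show L - (2*j+1) = (L - (2*j+2)) + 1 by omega]
    simp only [DD]
    rw [show 2*j+1-j = j+1 by omega]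
  have e2 : DD n β (x (j+1)) (fun k => if k = 2*j+2 then 0 else x (k-(j+1))) (2*j+2) (L-(2*j+2)) =
      PP n β L x (j+1) * HH n β (2*j+2) (x (j+1)) := by
    unfold PP
    rw [show L - (2*j+2) = (L - (2*(j+1)+1)) + 1 by omega]
    simp only [DD]
    congr 1
    · rw [show 2*(j+1)+1 = 2*j+2+1 by omega]
      apply DD_congr; intro k hk _; rw [if_neg (by omega)]
    · simp [op]
  have c1 := (DD_comm_lt n β (x j) (fun k => x (k-j)) (2*j+2) (L-(2*j+2)) (2*j) (x (j+1)) le_rfl).eq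
  have c2 : ∀ b t, b + 1 ≤ 2*(j+1) → HH n β b t * PP n β L x (j+1) = PP n β L x (j+1) * HH n β b t :=
    fun b t h => (DD_comm_lt n β _ _ _ _ b t (by omega)).eq
  have c3 : ∀ b t, b + 1 ≤ 2*(j+2) → HH n β b t * WW n β L x (j+2) d = WW n β L x (j+2) d * HH n β b t :=
    fun b t h => (WW_comm n β L x _ _ b t h).eq
  have r1 : HH n β (2*j) (x (j+1)) * WW n β L x j (d+2) = 
     DD n β (x j) (fun k => x (k-j)) (2*j+2) (L-(2*j+2)) * (PP n β L x (j+1) * (WW n β L x (j+2) d * 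
       (HH n β (2*j) (x (j+1)) * HH n β (2*j+1) (op β (x j) (x (j+1)))))) := by
    have : WW n β L x j (d+2) = PP n β L x j * (PP n β L x (j+1) * WW n β L x (j+2) d) := rfl
    rw [this, e1]
    simp only [← mul_assoc]
    rw [c1]
    simp only [mul_assoc]
    congr 1
    simp only [← mul_assoc]
    rw [mul_assoc (HH n β (2*j) _) , c2 (2*j+1) _ (by omega), ← mul_assoc, c2 (2*j) _ (by omega)]
    simp only [mul_assoc]
    rw [c3 (2*j+1) _ (by omega), ← mul_assoc (HH n β (2*j) _), c3 (2*j) _ (by omega)]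
    simp only [mul_assoc]
  have r2 := congrArg (fun T : Module.End R (FI → R) => T th) r1
  simp only [Module.End.mul_apply] at r2
  rw [FF, r2, HH_th n hn, e2]
  have r3 := congrArg (fun T : Module.End R (FI → R) => T (HH n β (2*j+1) (op β (x j) (x (j+1))) th))
    (c3 (2*j+2) (x (j+1)) (by omega))
  simp only [Module.End.mul_apply] at r3 ⊢
  rw [r3]

theorem sym_step (n : ℕ) (β : R) (L : ℕ) (x : ℕ → R) (i j : ℕ) (hij : j < i) (hL : i + j + 2 ≤ L) :
    HH n β (i+j) (x (i+1)) * PP n β L x j =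
      (DD n β (x j) (fun k => x (k-j)) (i+j+2) (L-(i+j+2)) *
        S1 β (UU n β (i+j)) (UU n β (i+j+1)) (x j) (x i) (x (i+1)) *
       DD n β (x j) (fun k => x (k-j)) (2*j+1) (i-j-1)) * HH n β (i+j+1) (x (i+1)) := by
  have e1 : PP n β L x j = DD n β (x j) (fun k => x (k-j)) (i+j+2) (L-(i+j+2)) *
      HH n β (i+j+1) (op β (x j) (x (i+1))) * HH n β (i+j) (op β (x j) (x i)) *
      DD n β (x j) (fun k => x (k-j)) (2*j+1) (i-j-1) := by
    unfold PP
    rw [show L - (2*j+1) = (i-j-1) + ((L - (i+j+2)) + 1 + 1) by omega, DD_split]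
    rw [show 2*j+1+(i-j-1) = i+j by omega]
    simp only [DD]
    rw [show i+j-j = i by omega, show i+j+1-j = i+1 by omega]
  have c1 := (DD_comm_lt n β (x j) (fun k => x (k-j)) (i+j+2) (L-(i+j+2)) (i+j) (x (i+1)) le_rfl).eq
  have c2 := (DD_comm_gt n β (x j) (fun k => x (k-j)) (2*j+1) (i-j-1) (i+j+1) (x (i+1)) (by omega)).eq
  have l1 := L1 β (UU n β (i+j)) (UU n β (i+j+1)) (UU_sq n β _) (UU_sq n β _) (UU_braid n β _)
    (x j) (x i) (x (i+1))
  change HH n β (i+j) _ * (HH n β (i+j+1) _ * HH n β (i+j) _) = _ * HH n β (i+j+1) _ at l1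
  rw [e1, mul_assoc _ _ (HH n β (i+j+1) (x (i+1))), ← c2]
  simp only [← mul_assoc] at l1 ⊢
  rw [c1]
  simp only [mul_assoc] at l1 ⊢
  congr 1
  rw [← mul_assoc (S1 _ _ _ _ _ _), ← l1]
  simp only [mul_assoc]

theorem sym_thm (n : ℕ) (hn : n % 2 = 0) (β : R) (L : ℕ) (x : ℕ → R) (i j d : ℕ) (hij : j ≤ i)
    (hd : n + 2 ≤ 2*(j+d)) (hL : i + j + d < L) :
    HH n β (i+j) (x (i+1)) (FF n β L x j d) =
      HH n β (i+j) (x i) (FF n β L (fun k => x (sg i k)) j d) := by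
  induction d generalizing j with
  | zero =>
    rw [HH_one n β _ _ (by omega), HH_one n β _ _ (by omega), FF, FF, WW_one _ _ _ _ _ _ (by omega),
      WW_one _ _ _ _ _ _ (by omega)]
  | succ d ih =>
    rcases Nat.lt_or_ge (2*j) n with h | h
    swap
    · rw [HH_one n β _ _ (by omega), HH_one n β _ _ (by omega), FF, FF, WW_one _ _ _ _ _ _ (by omega),
        WW_one _ _ _ _ _ _ (by omega)]
    rcases Nat.eq_or_lt_of_le hij with e | hlt
    · subst e
      obtain ⟨d, rfl⟩ : ∃ e, d = e + 1 := ⟨d - 1, by omega⟩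
      have b1 := sym_base n hn β L x j d (by omega)
      have b2 := sym_base n hn β L (fun k => x (sg j k)) j d (by omega)
      simp only [sg_self, sg_succ] at b2
      rw [show j + j = 2*j by ring, b1, b2]
      have w : WW n β L (fun k => x (sg j k)) (j+2) d = WW n β L x (j+2) d := by
        apply WW_congr; intro k hk; rw [sg_ne _ _ (by omega) (by omega)]
      have o : op β (x (j+1)) (x j) = op β (x j) (x (j+1)) := by simp only [op]; ring
      have d1 : DD n β (x (j+1)) (fun k => x (sg j (k-j))) (2*j+2) (L-(2*j+2)) = 
        DD n β (x (j+1)) (fun k => x (k-j)) (2*j+2) (L-(2*j+2)) := by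
        apply DD_congr; intro k h1 h2; rw [sg_ne _ _ (by omega) (by omega)]
      have d2 : DD n β (x j) (fun k => if k = 2*j+2 then 0 else x (sg j (k-(j+1)))) (2*j+2) (L-(2*j+2)) = 
        DD n β (x j) (fun k => if k = 2*j+2 then 0 else x (k-(j+1))) (2*j+2) (L-(2*j+2)) := by
        apply DD_congr; intro k h1 h2
        split_ifs with h3
        · rfl
        · rw [sg_ne _ _ (by omega) (by omega)]
      rw [w, o, d1, d2, DD_symm]
      intro k hk
      rw [if_neg (by omega)]
      congr 1; omega
    · have s1 := sym_step n β L x i j hlt (by omega)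
      have s2 := sym_step n β L (fun k => x (sg i k)) i j hlt (by omega)
      have d1 : DD n β (x j) (fun k => x (sg i (k-j))) (i+j+2) (L-(i+j+2)) = 
        DD n β (x j) (fun k => x (k-j)) (i+j+2) (L-(i+j+2)) := by
        apply DD_congr; intro k h1 h2; rw [sg_ne _ _ (by omega) (by omega)]
      have d2 : DD n β (x j) (fun k => x (sg i (k-j))) (2*j+1) (i-j-1) = 
        DD n β (x j) (fun k => x (k-j)) (2*j+1) (i-j-1) := by
        apply DD_congr; intro k h1 h2; rw [sg_ne _ _ (by omega) (by omega)]
      simp only [sg_self, sg_succ] at s2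
      rw [sg_ne i j (by omega) (by omega), d1, d2, S1_symm] at s2
      rw [FF_succ, FF_succ, ← Module.End.mul_apply, ← Module.End.mul_apply, s1, s2,
        Module.End.mul_apply, Module.End.mul_apply _ (HH n β (i+j+1) (x i)) ]
      congr 1
      exact ih (j+1) (by omega) (by omega) (by omega)
end

/-! ### Part 4 -/

noncomputable section
variable {R : Type*} [CommRing R]

theorem HH_apply (n : ℕ) (β : R) (a : ℕ) (t : R) (f : FI → R) (z : FI) :
    HH n β a t f z = f z + if a + 1 < n ∧ Ds a z then t * (f (cj a z) + β * f z) else 0 := by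
  simp only [HH, hh, UU, LinearMap.add_apply, Module.End.one_apply, LinearMap.smul_apply, Pi.add_apply,
    Pi.smul_apply, smul_eq_mul]
  by_cases h : a + 1 < n
  · by_cases h' : Ds a z <;> simp [h, h', TT_apply]
  · simp [h]

section nat
variable {S : Type*} [CommRing S] (φ : R →+* S)

theorem HH_nat (n : ℕ) (β : R) (a : ℕ) (t : R) (f : FI → R) :
    (fun z => φ (HH n β a t f z)) = HH n (φ β) a (φ t) (fun z => φ (f z)) := by
  funext z; simp only [HH_apply]; split_ifs <;> simp

theorem DD_nat (n : ℕ) (β a : R) (y : ℕ → R) (r len : ℕ) (f : FI → R) :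
    (fun z => φ (DD n β a y r len f z)) = DD n (φ β) (φ a) (fun k => φ (y k)) r len (fun z => φ (f z)) := by
  induction len generalizing r f with
  | zero => rfl
  | succ l ih =>
    simp only [DD, Module.End.mul_apply]
    rw [ih, HH_nat]
    simp only [op, map_add, map_mul]

theorem FF_nat (n : ℕ) (β : R) (L : ℕ) (x : ℕ → R) (j d : ℕ) :
    (fun z => φ (FF n β L x j d z)) = FF n (φ β) L (fun k => φ (x k)) j d := by
  induction d generalizing j with
  | zero => funext z; simp only [FF, WW, Module.End.one_apply, th]; split_ifs <;> simp
  | succ d ih =>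
    simp only [FF_succ, PP]
    rw [DD_nat, ih]
end nat

theorem HH_pos (N : Subsemiring R) (n : ℕ) (β : R) (hβ : β ∈ N) (a : ℕ) (t : R) (ht : t ∈ N) (f : FI → R)
    (hf : ∀ z, f z ∈ N) (z : FI) : HH n β a t f z ∈ N := by
  rw [HH_apply]
  refine N.add_mem (hf _) ?_
  split_ifs
  · exact N.mul_mem ht (N.add_mem (hf _) (N.mul_mem hβ (hf _)))
  · exact N.zero_mem

theorem DD_pos (N : Subsemiring R) (n : ℕ) (β : R) (hβ : β ∈ N) (a : R) (ha : a ∈ N) (y : ℕ → R)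
    (hy : ∀ k, y k ∈ N) (r len : ℕ) (f : FI → R)
    (hf : ∀ z, f z ∈ N) (z : FI) : DD n β a y r len f z ∈ N := by
  induction len generalizing r f z with
  | zero => exact hf z
  | succ l ih =>
    simp only [DD, Module.End.mul_apply]
    apply ih
    apply HH_pos N n β hβ _ _ _ _ hf
    exact N.add_mem (N.add_mem ha (hy _)) (N.mul_mem hβ (N.mul_mem ha (hy _)))

theorem FF_pos (N : Subsemiring R) (n : ℕ) (β : R) (hβ : β ∈ N) (L : ℕ) (x : ℕ → R) (hx : ∀ k, x k ∈ N)
    (j d : ℕ) (z : FI) : FF n β L x j d z ∈ N := by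
  induction d generalizing j z with
  | zero =>
    simp only [FF, WW, Module.End.one_apply, th]; split_ifs
    · exact N.one_mem
    · exact N.zero_mem
  | succ d ih =>
    simp only [FF_succ, PP]
    exact DD_pos N n β hβ _ (hx _) _ (fun _ => hx _) _ _ _ (ih _) z
end

/-! ### Part 5 -/

noncomputable section
variable {R : Type*} [CommRing R]

/-- z agrees with theta below 2j -/
def BB (j : ℕ) (z : FI) : Prop := ∀ p, p < 2*j → z.1 p = thF.1 p

theorem BB_ge (j : ℕ) (z : FI) (h : BB j z) (p : ℕ) (hp : 2*j ≤ p) : 2*j ≤ z.1 p := by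
  by_contra hc
  have h1 := h (z.1 p) (by omega)
  rw [z.2.1, thF_val] at h1
  split_ifs at h1 <;> omega

theorem BB_cj (j a : ℕ) (ha : 2*j ≤ a) (z : FI) (h : BB j z) : BB j (cj a z) := by
  intro p hp
  rw [cj_val, sg_ne _ p (by omega) (by omega), h p hp]
  have : thF.1 p < 2*j := by rw [thF_val]; split_ifs <;> omega
  rw [sg_ne _ _ (by omega) (by omega)]

theorem DD_last (n : ℕ) (β a : R) (y : ℕ → R) (r m : ℕ) :
    DD n β a y r (m+1) = HH n β (r+m) (op β a (y (r+m))) * DD n β a y r m := by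
  rw [DD_split]; simp [DD]

theorem col_supp (n : ℕ) (β a : R) (y : ℕ → R) (j m : ℕ) (f : FI → R)
    (hf : ∀ z, f z ≠ 0 → BB (j+1) z) (z : FI) (hz : DD n β a y (2*j+1) m f z ≠ 0) :
    BB j z ∧ z.1 (2*j) ≤ 2*j+1+m := by
  induction m generalizing z with
  | zero =>
    have h := hf z hz
    refine ⟨fun p hp => h p (by omega), ?_⟩
    rw [h (2*j) (by omega), thF_val]; split_ifs <;> omega
  | succ m ih =>
    rw [DD_last, Module.End.mul_apply, HH_apply] at hz
    by_cases h1 : DD n β a y (2*j+1) m f z = 0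
    · have h2 : DD n β a y (2*j+1) m f (cj (2*j+1+m) z) ≠ 0 := by
        intro h2; apply hz; rw [h1, h2]; simp
      obtain ⟨h3, h4⟩ := ih _ h2
      refine ⟨?_, ?_⟩
      · have := BB_cj j (2*j+1+m) (by omega) _ h3
        rwa [cj_cj] at this
      · rw [cj_val, sg_ne _ (2*j) (by omega) (by omega)] at h4
        have e := sg_sg (2*j+1+m) (z.1 (2*j))
        generalize sg (2*j+1+m) (z.1 (2*j)) = w at *
        rw [← e]; unfold sg; split_ifs <;> omega
    · obtain ⟨h3, h4⟩ := ih _ h1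
      exact ⟨h3, by omega⟩

theorem FF_supp (n : ℕ) (β : R) (L : ℕ) (x : ℕ → R) (j d : ℕ) (z : FI)
    (hz : FF n β L x j d z ≠ 0) : BB j z := by
  induction d generalizing j z with
  | zero =>
    have : z = thF := by
      by_contra h
      apply hz; simp [FF, WW, th, h]
    subst this
    intro p _; rfl
  | succ d ih =>
    rw [FF_succ, PP] at hz
    exact (col_supp n β _ _ j _ _ (ih (j+1)) z hz).1

/-- intermediate elements -/
def ZZ (n j a : ℕ) (z : FI) : Prop := BB j z ∧ (∀ p, n ≤ p → z.1 p = thF.1 p) ∧ z.1 (2*j) = a ∧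
  ∀ p q, 2*j < p → p < q → q < n → p ≠ a → q ≠ a → z.1 q < z.1 p

/-- column tops -/
def ZT (n j : ℕ) (z : FI) : Prop := BB j z ∧ (∀ p, n ≤ p → z.1 p = thF.1 p) ∧
  ∀ p q, 2*j ≤ p → p < q → q < n → z.1 q < z.1 p

theorem ZT_ZZ (n j : ℕ) (hn : n % 2 = 0) (h : 2*j < n) (z : FI) (hz : ZT n j z) : ZZ n j (n-1) z := by
  obtain ⟨h1, h2, h3⟩ := hz
  refine ⟨h1, h2, ?_, fun p q hp hq hqn _ _ => h3 p q (by omega) hq hqn⟩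
  have hlt : ∀ p, p < n → z.1 p < n := by
    intro p hp
    by_contra hc
    have := h2 (z.1 p) (by omega)
    rw [z.2.1, thF_val] at this
    split_ifs at this <;> omega
  have hge := BB_ge j z h1 (n-1) (by omega)
  by_cases e : z.1 (n-1) = 2*j
  · rw [← e, z.2.1]
  · have := h3 (2*j) (z.1 (n-1)) le_rfl (by omega) (hlt _ (by omega))
    rw [z.2.1] at this
    have := hlt (2*j) h
    omega

theorem ZZ_ZT (n j : ℕ) (z : FI) (hz : ZZ n j (2*j+1) z) : ZT n (j+1) z := by
  obtain ⟨h1, h2, h3, h4⟩ := hz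
  refine ⟨?_, h2, fun p q hp hq hqn => h4 p q (by omega) hq hqn (by omega) (by omega)⟩
  intro p hp
  by_cases e : p = 2*j
  · subst e; rw [h3, thF_val]; simp
  by_cases e : p = 2*j+1
  · subst e; rw [← h3, z.2.1, h3, thF_val]; rw [if_neg (by omega)]; omega
  exact h1 p (by omega)

theorem sg_mono (a p q : ℕ) (h : p < q) (h' : q ≠ a + 1 ∨ p ≠ a) : sg a p < sg a q := by
  unfold sg; split_ifs <;> omega

theorem ZZ_cj (n j a : ℕ) (ha : 2*j < a) (han : a + 1 < n) (z : FI) (hz : ZZ n j (a+1) z) :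
    ZZ n j a (cj a z) := by
  obtain ⟨h1, h2, h3, h4⟩ := hz
  have hlt : ∀ p, n ≤ p → n ≤ z.1 p ∨ z.1 p = n - 1 := by
    intro p hp
    rw [h2 p hp, thF_val]; split_ifs <;> omega
  have hinj : ∀ p, p ≠ 2*j → z.1 p ≠ a + 1 := by
    intro p hp e
    apply hp; rw [← z.2.1 p, e, ← h3, z.2.1]
  refine ⟨BB_cj j a (by omega) z h1, ?_, ?_, ?_⟩
  · intro p hp
    rw [cj_val, sg_ne _ p (by omega) (by omega)]
    have := hlt p hp
    have := hinj p (by omega)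
    rw [sg_ne _ _ (by omega) (by omega), h2 p hp]
  · rw [cj_val, sg_ne _ (2*j) (by omega) (by omega), h3, sg_succ]
  · intro p q hp hq hqn hpa hqa
    simp only [cj_val]
    have b1 := sg_mono a p q hq (Or.inr hpa)
    have b2 : 2*j < sg a p := by unfold sg; split_ifs <;> omega
    have b3 : sg a q < n := by unfold sg; split_ifs <;> omega
    have b4 : sg a p ≠ a + 1 := by unfold sg; split_ifs <;> omega
    have b5 : sg a q ≠ a + 1 := by unfold sg; split_ifs <;> omega
    exact sg_mono a _ _ (h4 _ _ b2 b1 b3 b4 b5) (Or.inl (hinj _ (by omega)))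

theorem col_top (n : ℕ) (β a : R) (y : ℕ → R) (j m : ℕ) (hm : 2*j+1+m < n) (f : FI → R)
    (hf : ∀ z, f z ≠ 0 → BB (j+1) z) (z : FI) (hz : ZZ n j (2*j+1+m) z) :
    ∃ z', ZT n (j+1) z' ∧ DD n β a y (2*j+1) m f z =
      (∏ k ∈ Finset.range m, op β a (y (2*j+1+k))) * f z' := by
  induction m generalizing z with
  | zero => exact ⟨z, ZZ_ZT n j z hz, by simp [DD]⟩
  | succ m ih =>
    obtain ⟨z', h1, h2⟩ := ih (by omega) _ (ZZ_cj n j (2*j+1+m) (by omega) (by omega) z hz)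
    refine ⟨z', h1, ?_⟩
    obtain ⟨g1, g2, g3, g4⟩ := hz
    have h0 : DD n β a y (2*j+1) m f z = 0 := by
      by_contra hc
      have := (col_supp n β a y j m f hf z hc).2
      omega
    have hD : Ds (2*j+1+m) z := by
      have e : z.1 (2*j+1+m+1) = 2*j := by
        rw [show 2*j+1+m+1 = z.1 (2*j) by omega, z.2.1]
      have := BB_ge j z g1 (2*j+1+m) (by omega)
      have ne : ∀ b, b ≠ z.1 (2*j+1+m) ∨ z.1 b = 2*j+1+m := by
        intro b; by_cases h : b = z.1 (2*j+1+m)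
        · right; rw [h, z.2.1]
        · left; exact h
      have n1 := ne (2*j)
      have n2 := ne (2*j+1+m+1)
      unfold Ds
      omega
    rw [DD_last, Module.End.mul_apply, HH_apply, h0, if_pos ⟨by omega, hD⟩, h2, Finset.prod_range_succ]
    ring

theorem top_thm (n : ℕ) (hn : n % 2 = 0) (β : R) (L : ℕ) (hL : n ≤ L) (x : ℕ → R) (j d : ℕ)
    (hd : n ≤ 2*(j+d)) (z : FI) (hz : ZT n j z) : FF n β L x j d z =
    ∏ e ∈ Finset.range d, ∏ k ∈ Finset.range (n-2-2*(j+e)), op β (x (j+e)) (x (j+e+1+k)) := by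
  have base : n ≤ 2*j → FF n β L x j d z =
    ∏ e ∈ Finset.range d, ∏ k ∈ Finset.range (n-2-2*(j+e)), op β (x (j+e)) (x (j+e+1+k)) := by
    intro h
    have e : z = thF := by
      apply Subtype.ext; funext p
      rcases Nat.lt_or_ge p n with hp | hp
      · exact hz.1 p (by omega)
      · exact hz.2.1 p hp
    rw [FF, WW_one _ _ _ _ _ _ h, Finset.prod_eq_one]
    · simp [th, e]
    · intro e _
      rw [show n - 2 - 2*(j+e) = 0 by omega]; simp
  induction d generalizing j z with
  | zero => exact base (by omega)
  | succ d ih =>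
    rcases Nat.lt_or_ge (2*j) n with h | h
    swap
    · exact base h
    rw [FF_succ, PP, show L - (2*j+1) = (n-2-2*j) + (L - (n - 1)) by omega, DD_split,
      DD_one n β _ _ (2*j+1+(n-2-2*j)) _ (by omega), one_mul]
    obtain ⟨z', h1, h2⟩ := col_top n β (x j) (fun k => x (k-j)) j (n-2-2*j) (by omega) _ 
      (FF_supp n β L x (j+1) d) z (by
        rw [show 2*j+1+(n-2-2*j) = n - 1 by omega]; exact ZT_ZZ n j hn h z hz)
    rw [h2, ih (j+1) (by omega) z' h1, Finset.prod_range_succ', mul_comm]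
    · congr 1
      · apply Finset.prod_congr rfl; intro e _
        rw [show j+1+e = j+(e+1) by omega]
      · simp only [Nat.add_zero]
        apply Finset.prod_congr rfl; intro k _
        rw [show 2*j+1+k-j = j+1+k by omega]
    · intro h'
      have e : z' = thF := by
        apply Subtype.ext; funext p
        rcases Nat.lt_or_ge p n with hp | hp
        · exact h1.1 p (by omega)
        · exact h1.2.1 p hp
      rw [FF, WW_one _ _ _ _ _ _ h', Finset.prod_eq_one]
      · simp [th, e]
      · intro e _
        rw [show n - 2 - 2*(j+1+e) = 0 by omega]; simp
end

/-! ### Part 6 -/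

noncomputable section

/-- extend by theta -/
def embFun {n : ℕ} (z : Equiv.Perm (Fin n)) (p : ℕ) : ℕ :=
  if h : p < n then (z ⟨p, h⟩ : Fin n) else thF.1 p

theorem embFun_lt {n : ℕ} (z : Equiv.Perm (Fin n)) (i : Fin n) : embFun z i.1 = z i := by
  simp [embFun]

theorem embFun_ge {n : ℕ} (z : Equiv.Perm (Fin n)) (p : ℕ) (h : n ≤ p) : embFun z p = thF.1 p := by
  simp [embFun, Nat.not_lt.2 h]

theorem thF_ge (n p : ℕ) (hn : n % 2 = 0) (h : n ≤ p) : n ≤ thF.1 p := by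
  rw [thF_val]; split_ifs <;> omega

/-- embedding into FI -/
def emb {n : ℕ} (hn : n % 2 = 0) (z : Equiv.Perm (Fin n)) (hz : IsFPF z) : FI :=
  ⟨embFun z, by
    intro p
    rcases Nat.lt_or_ge p n with h | h
    · have := embFun_lt z ⟨p, h⟩
      simp only at this
      rw [this, embFun_lt, ← Equiv.Perm.mul_apply, hz.1]; rfl
    · rw [embFun_ge z p h, embFun_ge z _ (thF_ge n p hn h)]; exact thF.2.1 p, by
    intro p
    rcases Nat.lt_or_ge p n with h | h
    · have := embFun_lt z ⟨p, h⟩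
      simp only at this
      rw [this]
      intro e
      exact hz.2 ⟨p, h⟩ (Fin.ext e)
    · rw [embFun_ge z p h]; exact thF.2.2 p⟩

theorem emb_lt {n : ℕ} (hn : n % 2 = 0) (z : Equiv.Perm (Fin n)) (hz : IsFPF z) (i : Fin n) :
    (emb hn z hz).1 i.1 = z i := embFun_lt z i

theorem emb_ge {n : ℕ} (hn : n % 2 = 0) (z : Equiv.Perm (Fin n)) (hz : IsFPF z) (p : ℕ) (h : n ≤ p) :
    (emb hn z hz).1 p = thF.1 p := embFun_ge z p h

theorem sg_swap {n : ℕ} (i j : Fin n) (hij : j.1 = i.1 + 1) (k : Fin n) :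
    sg i.1 k.1 = (Equiv.swap i j k).1 := by
  rw [Equiv.swap_apply_def]
  simp only [sg, Fin.ext_iff]
  split_ifs <;> omega

theorem fpf_conj {n : ℕ} (z : Equiv.Perm (Fin n)) (hz : IsFPF z) (i j : Fin n) :
    IsFPF (Equiv.swap i j * z * Equiv.swap i j) := by
  refine ⟨?_, ?_⟩
  · calc _ = Equiv.swap i j * z * (Equiv.swap i j * Equiv.swap i j) * z * Equiv.swap i j := by
          simp only [mul_assoc]
      _ = Equiv.swap i j * (z * z) * Equiv.swap i j := by simp only [Equiv.swap_mul_self, mul_one, mul_assoc]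
      _ = 1 := by rw [hz.1, mul_one, Equiv.swap_mul_self]
  · intro k h
    simp only [Equiv.Perm.mul_apply] at h
    apply hz.2 (Equiv.swap i j k)
    have := congrArg (Equiv.swap i j) h
    rwa [Equiv.swap_apply_self] at this

theorem emb_conj {n : ℕ} (hn : n % 2 = 0) (z : Equiv.Perm (Fin n)) (hz : IsFPF z) (i j : Fin n)
    (hij : j.1 = i.1 + 1) :
    emb hn (Equiv.swap i j * z * Equiv.swap i j) (fpf_conj z hz i j) = cj i.1 (emb hn z hz) := by
  apply Subtype.ext; funext p
  rw [cj_val]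
  have hj := j.2
  rcases Nat.lt_or_ge p n with h | h
  · have h1 := emb_lt hn _ (fpf_conj z hz i j) ⟨p, h⟩
    have h2 := sg_swap i j hij ⟨p, h⟩
    simp only at h1 h2
    rw [h1, h2, emb_lt, sg_swap i j hij]; rfl
  · rw [emb_ge _ _ _ _ h, sg_ne _ p (by omega) (by omega), emb_ge _ _ _ _ h]
    have := thF_ge n p hn h
    rw [sg_ne _ _ (by omega) (by omega)]

/-- variables -/
def xv (n : ℕ) (k : ℕ) : MvPolynomial (Fin n) Rb := if h : k < n then X ⟨k, h⟩ else 0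

theorem xv_lt {n : ℕ} (i : Fin n) : xv n i.1 = X i := by simp [xv]

/-- our candidate -/
def Fv (n : ℕ) : FI → MvPolynomial (Fin n) Rb := FF n (C bb) (2*n+2) (xv n) 0 (n/2+1)

theorem Fv_div {n : ℕ} (hn : n % 2 = 0) (z : Equiv.Perm (Fin n)) (hz : IsFPF z) (i j : Fin n)
    (hij : j.1 = i.1 + 1) (h1 : z i ≠ j) (h3 : z j < z i) :
    IsDivDiffB i j (Fv n (emb hn z hz))
      (Fv n (emb hn (Equiv.swap i j * z * Equiv.swap i j) (fpf_conj z hz i j))) := by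
  have hj := j.2
  rw [emb_conj hn z hz i j hij]
  have s := sym_thm n hn (C bb : MvPolynomial (Fin n) Rb) (2*n+2) (xv n) i.1 0 (n/2+1) (by omega)
    (by omega) (by omega)
  have hx : (fun k => xv n (sg i.1 k)) = fun k => (rename (Equiv.swap i j)).toRingHom (xv n k) := by
    funext k
    rcases Nat.lt_or_ge k n with h | h
    · have e := sg_swap i j hij ⟨k, h⟩
      have e2 := xv_lt (⟨k, h⟩ : Fin n)
      simp only at e e2
      rw [e, xv_lt, e2]; simp
    · rw [sg_ne _ _ (by omega) (by omega)]; simp [xv, Nat.not_lt.2 h]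
  have hb : (rename (Equiv.swap i j)).toRingHom (C bb : MvPolynomial (Fin n) Rb) = C bb := by simp
  have nat := FF_nat (rename (Equiv.swap i j)).toRingHom n (C bb : MvPolynomial (Fin n) Rb) (2*n+2) (xv n) 0 (n/2+1)
  rw [hb, ← hx] at nat
  rw [← nat] at s
  change HH n _ _ _ (Fv n) = HH n _ _ _ (fun z => rename (Equiv.swap i j) (Fv n z)) at s
  rw [← hij, xv_lt, xv_lt] at s
  have hD : Ds i.1 (emb hn z hz) := by
    unfold Ds
    rw [← hij, emb_lt, emb_lt]
    exact ⟨h3, fun e => h1 (Fin.ext e)⟩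
  have sz := congrFun s (emb hn z hz)
  have sy := congrFun s (cj i.1 (emb hn z hz))
  rw [HH_apply, HH_apply, if_pos ⟨by omega, hD⟩, if_pos ⟨by omega, hD⟩] at sz
  have hD' : ¬ Ds (i.1+0) (cj i.1 (emb hn z hz)) := Ds_cj _ _ hD
  rw [HH_apply, HH_apply, if_neg (fun h => hD' h.2), if_neg (fun h => hD' h.2)] at sy
  simp only [add_zero] at sz sy
  unfold IsDivDiffB
  simp only [map_mul, map_add, map_one, rename_C, rename_X, Equiv.swap_apply_right]
  rw [← sy] at sz
  linear_combination (-1) * sz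

theorem Fv_top {n : ℕ} (hn : n % 2 = 0) (hz : IsFPF (revPerm n)) : Fv n (emb hn (revPerm n) hz) = spTop n := by
  unfold Fv
  rw [top_thm n hn _ _ (by omega) _ _ _ (by omega)]
  · unfold spTop
    rw [Finset.prod_sigma']
    refine Finset.prod_bij' (fun s hs => (⟨s.1, ?_⟩, ⟨s.1+1+s.2, ?_⟩)) (fun p _ => ⟨p.1.1, p.2.1 - p.1.1 - 1⟩) 
      ?_ ?_ ?_ ?_ ?_
    · simp at hs; omega
    · simp at hs; omega
    · intro s hs
      simp only [Finset.mem_sigma, Finset.mem_range] at hs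
      simp only [Finset.mem_filter, Finset.mem_univ, true_and, Fin.mk_lt_mk]
      omega
    · rintro ⟨⟨a, ha⟩, ⟨b, hb⟩⟩ hp
      simp only [Finset.mem_filter, Finset.mem_univ, true_and, Fin.mk_lt_mk] at hp
      simp only [Finset.mem_sigma, Finset.mem_range]
      omega
    · rintro ⟨a, b⟩ hs
      simp only [Sigma.mk.injEq, heq_eq_eq, true_and]
      omega
    · rintro ⟨⟨a, ha⟩, ⟨b, hb⟩⟩ hp
      simp only [Finset.mem_filter, Finset.mem_univ, true_and, Fin.mk_lt_mk] at hp
      simp only [Prod.mk.injEq, Fin.mk.injEq, true_and]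
      omega
    · rintro ⟨a, b⟩ hs
      simp at hs
      have h1 : a < n := by omega
      have h2 : a + 1 + b < n := by omega
      simp [op, oplus, xv, h1, h2]
  · refine ⟨fun p hp => by omega, fun p hp => emb_ge _ _ _ _ hp, ?_⟩
    intro p q _ hpq hq
    have e1 := emb_lt hn _ hz ⟨p, by omega⟩
    have e2 := emb_lt hn _ hz ⟨q, hq⟩
    simp only at e1 e2
    rw [e1, e2]
    simp [revPerm, Fin.rev]
    omega

theorem Fv_nonneg (n : ℕ) (z : FI) (m : Fin n →₀ ℕ) (k : ℕ) : 0 ≤ (coeff m (Fv n z)).coeff k := by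
  have h : Fv n z ∈ (MvPolynomial.map (σ := Fin n) (Polynomial.mapRingHom (Nat.castRingHom ℤ))).rangeS := by
    apply FF_pos
    · exact ⟨C Polynomial.X, by simp [bb]⟩
    · intro k
      unfold xv
      split_ifs with h
      · exact ⟨X ⟨k, h⟩, by simp⟩
      · exact Subsemiring.zero_mem _
  obtain ⟨q, hq⟩ := h
  rw [← hq, coeff_map]
  simp

theorem exists_asc {n : ℕ} (z : Equiv.Perm (Fin n)) (hne : z ≠ revPerm n) :
    ∃ i j : Fin n, j.1 = i.1 + 1 ∧ z i < z j := by
  by_contra hc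
  push Not at hc
  apply hne
  have hanti : StrictAnti z := by
    have key : ∀ d : ℕ, ∀ i j : Fin n, j.1 = i.1 + 1 + d → z j < z i := by
      intro d
      induction d with
      | zero => 
        intro i j h
        refine lt_of_le_of_ne (hc i j h) ?_
        intro e
        have := z.injective e
        rw [this] at h; omega
      | succ d ih =>
        intro i j h
        have hj := j.2
        have a1 := ih i ⟨i.1+1+d, by omega⟩ rfl
        have a2 := hc ⟨i.1+1+d, by omega⟩ j (by simp; omega)
        exact lt_of_le_of_lt a2 a1
    intro i j hij
    exact key (j.1 - i.1 - 1) i j (by have := Fin.lt_def.1 hij; omega)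
  have hm : StrictMono (fun i => Fin.rev (z i)) := fun i j h => Fin.rev_lt_rev.2 (hanti h)
  have hid : ∀ i, Fin.rev (z i) = i := by
    have := Subsingleton.elim (α := Fin n ≃o Fin n)
      (StrictMono.orderIsoOfSurjective _ hm (by
        intro y; exact ⟨z.symm (Fin.rev y), by simp⟩)) (OrderIso.refl _)
    intro i
    exact congrArg (fun f : Fin n ≃o Fin n => f i) this
  apply Equiv.ext; intro i
  have := congrArg Fin.rev (hid i)
  rw [Fin.rev_rev] at this
  exact this

/-- measure -/
def msr {n : ℕ} (z : Equiv.Perm (Fin n)) : ℕ := ∑ p : Fin n, p.1 * (z p).1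

theorem msr_lt {n : ℕ} (z : Equiv.Perm (Fin n)) (hz : IsFPF z) (i j : Fin n) (hij : j.1 = i.1 + 1) (h : z i < z j)
    (hzi : z i ≠ j) (hzj : z j ≠ i) :
    msr (Equiv.swap i j * z * Equiv.swap i j) < msr z := by
  have hne : i ≠ j := by intro e; rw [e] at hij; omega
  have hzz : ∀ p, z (z p) = p := fun p => by rw [← Equiv.Perm.mul_apply, hz.1]; rfl
  let δ : Fin n → ℤ := fun q => (if q = i then 1 else 0) - (if q = j then 1 else 0)
  have hs : ∀ q : Fin n, ((Equiv.swap i j q).1 : ℤ) = q.1 + δ q := by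
    intro q
    simp only [δ]
    rw [Equiv.swap_apply_def]
    by_cases h1 : q = i
    · have : q ≠ j := by rw [h1]; exact hne
      simp [h1, hne, hij]
    · by_cases h2 : q = j
      · simp [h2, hne.symm, hij]
      · simp [h1, h2]
  have hδ : ∀ q, δ q * δ (z q) = 0 := by
    intro q
    simp only [δ]
    by_cases h1 : q = i
    · subst h1; simp [hz.2 q, hzi]
    · by_cases h2 : q = j
      · subst h2; simp [hz.2 q, hzj]
      · simp [h1, h2]
  have hsum : ∀ f : Fin n → ℤ, ∑ q, δ q * f q = f i - f j := by
    intro f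
    simp [δ, sub_mul, Finset.sum_sub_distrib]
  have e0 : (msr (Equiv.swap i j * z * Equiv.swap i j) : ℤ) =
      ∑ q : Fin n, ((q.1 : ℤ) + δ q) * ((z q).1 + δ (z q)) := by
    unfold msr
    push_cast
    rw [← Equiv.sum_comp (Equiv.swap i j)]
    apply Finset.sum_congr rfl; intro q _
    simp only [Equiv.Perm.coe_mul, Function.comp_apply, Equiv.swap_apply_self, hs]
  have e1 : ∑ q : Fin n, (q.1 : ℤ) * δ (z q) = ∑ q : Fin n, δ q * ((z q).1 : ℤ) := by
    rw [← Equiv.sum_comp z]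
    apply Finset.sum_congr rfl; intro q _
    rw [hzz, mul_comm]
  have e2 : (msr (Equiv.swap i j * z * Equiv.swap i j) : ℤ) = msr z + 2 * (((z i).1 : ℤ) - (z j).1) := by
    rw [e0]
    have : ∀ q : Fin n, ((q.1 : ℤ) + δ q) * ((z q).1 + δ (z q)) =
        q.1 * (z q).1 + q.1 * δ (z q) + δ q * (z q).1 := by
      intro q; linear_combination hδ q
    simp only [this, Finset.sum_add_distrib]
    rw [e1, hsum]
    unfold msr
    push_cast
    ring
  have h' : (z i).1 < (z j).1 := h
  omega

theorem G_eq {n : ℕ} (hn : n % 2 = 0) (G : Equiv.Perm (Fin n) → MvPolynomial (Fin n) Rb) (hG : IsSpFam n G)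
    (N : ℕ) : ∀ (z : Equiv.Perm (Fin n)) (hz : IsFPF z), msr z < N → G z = Fv n (emb hn z hz) := by
  induction N with
  | zero => intro z hz h; omega
  | succ N ih =>
    intro z hz hN
    by_cases e : z = revPerm n
    · subst e; rw [hG.1, Fv_top hn hz]
    obtain ⟨i, j, hij, hlt⟩ := exists_asc z e
    have hne : i ≠ j := by intro e; rw [e] at hij; omega
    set y := Equiv.swap i j * z * Equiv.swap i j with hy
    have hyF : IsFPF y := fpf_conj z hz i j
    have hzz : ∀ p, z (z p) = p := fun p => by rw [← Equiv.Perm.mul_apply, hz.1]; rfl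
    have hzi : z i ≠ j := by
      intro e'
      have : z j = i := by rw [← e', hzz]
      rw [e', this, Fin.lt_def] at hlt; omega
    have hzj : z j ≠ i := by
      intro e'
      exact hzi (by rw [← e', hzz])
    have yi : y i = z j := by
      simp only [hy, Equiv.Perm.mul_apply, Equiv.swap_apply_left]
      exact Equiv.swap_apply_of_ne_of_ne hzj (hz.2 j)
    have yj : y j = z i := by
      simp only [hy, Equiv.Perm.mul_apply, Equiv.swap_apply_right]
      exact Equiv.swap_apply_of_ne_of_ne (hz.2 i) hzi
    have hback : Equiv.swap i j * y * Equiv.swap i j = z := by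
      rw [hy]
      calc _ = (Equiv.swap i j * Equiv.swap i j) * z * (Equiv.swap i j * Equiv.swap i j) := by
            simp only [mul_assoc]
        _ = z := by simp
    have hyG := ih y hyF (by have := msr_lt z hz i j hij hlt hzi hzj; rw [← hy] at this; omega)
    have g1 := hG.2 y hyF i j hij (by rw [yi]; exact hz.2 j) (by rw [yj]; exact hz.2 i) (by rw [yi, yj]; exact hlt)
    have g2 := Fv_div hn y hyF i j hij (by rw [yi]; exact hz.2 j) (by rw [yi, yj]; exact hlt)
    have e3 : emb hn (Equiv.swap i j * y * Equiv.swap i j) (fpf_conj y hyF i j) = emb hn z hz := by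
      congr 1
    rw [e3] at g2
    rw [hback, hyG] at g1
    unfold IsDivDiffB at g1 g2
    have hX : (X i - X j : MvPolynomial (Fin n) Rb) ≠ 0 := by
      intro h
      exact hne (X_injective (sub_eq_zero.1 h))
    exact mul_left_cancel₀ hX (g1.trans g2.symm)

end

theorem statement4 (n : ℕ) (hpos : 0 < n) (hev : n % 2 = 0)
    (G : Equiv.Perm (Fin n) → MvPolynomial (Fin n) Rb) (hG : IsSpFam n G)
    (z : Equiv.Perm (Fin n)) (hz : IsFPF z) :
    ∀ (m : Fin n →₀ ℕ) (k : ℕ), 0 ≤ (MvPolynomial.coeff m (G z)).coeff k := by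
  intro m k
  rw [G_eq hev G hG _ z hz (Nat.lt_succ_self _)]
  exact Fv_nonneg n _ m k

end
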